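/- Let G be a cycle on an odd number n ≥ 3 of vertices and u,v distinct vertices. Then there is a unique vertex x with d(x,u)=d(x,v), and fix(u,v) = V(G) \ {x}. -/

import Mathlib

def fixesPair {V : Type*} (G : SimpleGraph V) (x u v : V) : Prop :=
  ∀ g : G ≃g G, g x = x → g u ≠ v ∧ g v ≠ u

def fixSet {V : Type*} (G : SimpleGraph V) (u v : V) : Set V :=
  {x | fixesPair G x u v}

/-!
View the cycle as the circulant graph on `ℤ/n` with the single jump `1`. A shortest path never
turns back, so a vertex at distance `k` from `y` is `y + k` or `y - k`; two distinct vertices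
`u`, `v` at the same distance from `y` are therefore opposite, that is `y + y = u + v`. In that case
the reflection `z ↦ u + v - z` fixes `y` and swaps `u` with `v`, so `y` is not in `fix(u, v)`.
Finally, an automorphism that fixes `y` and carries `u` to `v` forces `d(y, u) = d(y, v)`, which
closes the circle: the three conditions are equivalent. For odd `n` doubling is a bijection of
`ℤ/n`, so exactly one `y` satisfies `y + y = u + v`.
-/

open SimpleGraph

section Automorphisms

variable {V W : Type*} {G : SimpleGraph V} {H : SimpleGraph W}

theorem edist_map_le (f : G →g H) (a b : V) : H.edist (f a) (f b) ≤ G.edist a b :=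
  le_iInf fun p => by simpa only [Walk.length_map] using edist_le (p.map f)

theorem edist_map_iso (g : G ≃g H) (a b : V) : H.edist (g a) (g b) = G.edist a b :=
  le_antisymm (edist_map_le g.toHom a b) <| by
    simpa using edist_map_le g.symm.toHom (g a) (g b)

theorem dist_map_iso (g : G ≃g H) (a b : V) : H.dist (g a) (g b) = G.dist a b :=
  congrArg ENat.toNat (edist_map_iso g a b)

theorem notMem_fixSet_iff {y u v : V} :
    y ∉ fixSet G u v ↔ ∃ g : G ≃g G, g y = y ∧ g u = v := by
  constructor
  · intro h
    by_contra! hg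
    refine h fun g hy => ⟨hg g hy, fun hvu => hg g.symm ?_ ?_⟩
    · exact g.toEquiv.symm_apply_eq.2 hy.symm
    · exact g.toEquiv.symm_apply_eq.2 hvu.symm
  · rintro ⟨g, hy, huv⟩ h
    exact (h g hy).1 huv

theorem dist_eq_dist_of_notMem_fixSet {y u v : V} (h : y ∉ fixSet G u v) :
    G.dist y u = G.dist y v := by
  obtain ⟨g, hy, huv⟩ := notMem_fixSet_iff.1 h
  simpa only [hy, huv] using (dist_map_iso g y u).symm

end Automorphisms

section Distance

variable {A : Type*} [AddGroup A] {e : A}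

theorem circulantGraph_edist_nsmul_add_le (k : ℕ) (a : A) :
    (circulantGraph {e}).edist a (k • e + a) ≤ k := by
  induction k generalizing a with
  | zero => simp
  | succ k ih =>
    have step : (circulantGraph {e}).edist a (e + a) ≤ 1 := by
      rw [edist_le_one_iff_adj_or_eq]
      by_cases h : a = e + a
      · exact Or.inr h
      · exact Or.inl (by simp [h])
    calc (circulantGraph {e}).edist a ((k + 1) • e + a)
        = (circulantGraph {e}).edist a (k • e + (e + a)) := by rw [succ_nsmul, add_assoc]
      _ ≤ (circulantGraph {e}).edist a (e + a)
          + (circulantGraph {e}).edist (e + a) (k • e + (e + a)) := SimpleGraph.edist_triangle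
      _ ≤ 1 + k := add_le_add step (ih (e + a))
      _ = (k + 1 : ℕ) := by rw [add_comm, Nat.cast_add, Nat.cast_one]

theorem circulantGraph_dist_zsmul_add_le (j : ℤ) (a : A) :
    (circulantGraph {e}).dist a (j • e + a) ≤ j.natAbs := by
  refine ENat.toNat_le_of_le_natCast ?_
  obtain ⟨k, rfl | rfl⟩ := j.eq_nat_or_neg
  · simpa using circulantGraph_edist_nsmul_add_le k a
  · simpa [edist_comm] using circulantGraph_edist_nsmul_add_le (e := e) k (-(k • e) + a)

theorem circulantGraph_exists_zsmul_add_eq_of_walk {a b : A} (p : (circulantGraph {e}).Walk a b) :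
    ∃ j : ℤ, j.natAbs ≤ p.length ∧ j • e + a = b := by
  induction p with
  | nil => exact ⟨0, by simp⟩
  | @cons a c b hac p ih =>
    obtain ⟨j, hj, rfl⟩ := ih
    have hstep : a - c = e ∨ c - a = e := by simpa using hac.2
    rw [Walk.length_cons]
    rcases hstep with h | h
    · refine ⟨j - 1, by lia, ?_⟩
      rw [sub_one_zsmul, ← h]
      simp [add_assoc]
    · refine ⟨j + 1, by lia, ?_⟩
      rw [add_one_zsmul, ← h]
      simp [add_assoc]

theorem circulantGraph_exists_zsmul_add_eq_of_reachable {a b : A}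
    (h : (circulantGraph {e}).Reachable a b) :
    ∃ j : ℤ, j.natAbs = (circulantGraph {e}).dist a b ∧ j • e + a = b := by
  obtain ⟨p, hp⟩ := h.exists_walk_length_eq_dist
  obtain ⟨j, hj, rfl⟩ := circulantGraph_exists_zsmul_add_eq_of_walk p
  exact ⟨j, (hj.trans_eq hp).antisymm (circulantGraph_dist_zsmul_add_le j a), rfl⟩

end Distance

section Reflection

variable {A : Type*} [AddCommGroup A]

/-- The reflection `z ↦ c - z` of a circulant graph, as an automorphism; it swaps `u` and `v`
exactly when `c = u + v`. -/
def circulantGraphReflection (s : Set A) (c : A) : circulantGraph s ≃g circulantGraph s where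
  toEquiv := Equiv.subLeft c
  map_rel_iff' {a b} := by
    simp only [Equiv.subLeft_apply, circulantGraph_adj, sub_sub_sub_cancel_left,
      sub_right_inj, or_comm]

theorem circulantGraphReflection_apply (s : Set A) (c a : A) :
    circulantGraphReflection s c a = c - a := rfl

theorem notMem_fixSet_circulantGraph_of_add_self_eq (s : Set A) {y u v : A}
    (h : y + y = u + v) : y ∉ fixSet (circulantGraph s) u v := by
  refine notMem_fixSet_iff.2 ⟨circulantGraphReflection s (u + v), ?_, ?_⟩
  · rw [circulantGraphReflection_apply, ← h, add_sub_cancel_right]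
  · rw [circulantGraphReflection_apply, add_sub_cancel_left]

end Reflection

section Midpoints

variable {A : Type*} [AddCommGroup A] {e u v y : A}

theorem add_self_eq_of_circulantGraph_dist_eq (huv : u ≠ v)
    (hu : (circulantGraph {e}).Reachable y u) (hv : (circulantGraph {e}).Reachable y v)
    (h : (circulantGraph {e}).dist y u = (circulantGraph {e}).dist y v) : y + y = u + v := by
  obtain ⟨i, hi, rfl⟩ := circulantGraph_exists_zsmul_add_eq_of_reachable hu
  obtain ⟨j, hj, rfl⟩ := circulantGraph_exists_zsmul_add_eq_of_reachable hv
  obtain rfl | rfl := Int.natAbs_eq_natAbs_iff.1 (hi.trans (h.trans hj.symm))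
  · exact absurd rfl huv
  · rw [neg_zsmul]
    abel

theorem circulantGraph_dist_eq_dist_iff (hG : (circulantGraph {e}).Preconnected) (huv : u ≠ v) :
    (circulantGraph {e}).dist y u = (circulantGraph {e}).dist y v ↔ y + y = u + v :=
  ⟨add_self_eq_of_circulantGraph_dist_eq huv (hG y u) (hG y v), fun h =>
    dist_eq_dist_of_notMem_fixSet (notMem_fixSet_circulantGraph_of_add_self_eq {e} h)⟩

theorem mem_fixSet_circulantGraph_iff (hG : (circulantGraph {e}).Preconnected) (huv : u ≠ v) :
    y ∈ fixSet (circulantGraph {e}) u v ↔ y + y ≠ u + v :=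
  ⟨fun hy h => notMem_fixSet_circulantGraph_of_add_self_eq {e} h hy, fun h => by
    by_contra hy
    exact h ((circulantGraph_dist_eq_dist_iff hG huv).1 (dist_eq_dist_of_notMem_fixSet hy))⟩

end Midpoints

theorem existsUnique_add_self_eq_of_odd_card {A : Type*} [AddGroup A] (hA : Odd (Nat.card A))
    (w : A) : ∃! x : A, x + x = w := by
  simpa only [nsmulCoprime_apply, two_nsmul] using
    (nsmulCoprime hA.coprime_two_right).bijective.existsUnique w

-- Besides the odd cycles, this covers the two-way infinite path, for `u` and `v` at even distance.
theorem stmt5_general {A : Type*} [AddCommGroup A] {e u v : A}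
    (hG : (circulantGraph {e}).Preconnected) (huv : u ≠ v) (hmid : ∃! x, x + x = u + v) :
    ∃ x : A,
      ((circulantGraph {e}).dist x u = (circulantGraph {e}).dist x v ∧
        ∀ y : A, (circulantGraph {e}).dist y u = (circulantGraph {e}).dist y v → y = x) ∧
      fixSet (circulantGraph {e}) u v = Set.univ \ {x} := by
  simp only [circulantGraph_dist_eq_dist_iff hG huv]
  obtain ⟨x, hx, hunique⟩ := hmid
  refine ⟨x, ⟨hx, hunique⟩, Set.ext fun y => ?_⟩
  have hy : y + y = u + v ↔ y = x := ⟨hunique y, fun h => h ▸ hx⟩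
  simp [mem_fixSet_circulantGraph_iff hG huv, hy]

/-- In an odd cycle `C_n`, `n ≥ 3`, for distinct `u,v` there is a unique vertex `x`
equidistant from `u` and `v`, and the fixing set of `(u,v)` is everything except `x`. -/
theorem stmt5 {n : ℕ} (hn : Odd n) (hn3 : 3 ≤ n) (u v : Fin n) (huv : u ≠ v) :
    ∃ x : Fin n,
      ((SimpleGraph.cycleGraph n).dist x u = (SimpleGraph.cycleGraph n).dist x v ∧
        ∀ y : Fin n,
          (SimpleGraph.cycleGraph n).dist y u = (SimpleGraph.cycleGraph n).dist y v → y = x) ∧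
      fixSet (SimpleGraph.cycleGraph n) u v = Set.univ \ {x} := by
  obtain ⟨m, rfl⟩ := hn
  have hconn := (cycleGraph_connected (n := 2 * m)).preconnected
  rw [cycleGraph_eq_circulantGraph] at hconn ⊢
  exact stmt5_general hconn huv (existsUnique_add_self_eq_of_odd_card (by simp) (u + v))
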